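/- Let α > 1 be a fixed real number. There exists a constant K(α) > 0 such that for all integers D > 2 and n ≥ 16, every sunflower-free family F ⊆ (ℤ_D)^n satisfies |F| ≤ K(α)·n!·((log log log n)^2/(α·log log n))^n. -/

import Mathlib

/-- Exactly two of `a`, `b`, `c` are equal. -/
def ExactlyTwoEq {β : Type*} (a b c : β) : Prop :=
  (a = b ∧ a ≠ c) ∨ (a = c ∧ a ≠ b) ∨ (b = c ∧ a ≠ b)

/-- A family `F ⊆ (ℤ_D)^n` is sunflower-free if for every three distinct members
there is a coordinate where exactly two of the three entries agree. -/
def SunflowerFreeZMod (D n : ℕ) (F : Finset (Fin n → ZMod D)) : Prop :=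
  ∀ x ∈ F, ∀ y ∈ F, ∀ z ∈ F, x ≠ y → y ≠ z → x ≠ z →
    ∃ i : Fin n, ExactlyTwoEq (x i) (y i) (z i)

/-!
Identify a word with its graph, a set of `n` points of `Fin n × β`: a sunflower with three petals
among the graphs is exactly what a sunflower-free family excludes. So it suffices to find a
sunflower in every family of more than `r ^ n` sets of size `n`, where `r = 384 n / log n`. This
gives `#F ≤ (384 n / log n) ^ n`, which is smaller than the required bound up to a constant because
`(n / e) ^ n ≤ n!` and `log log n = o(log n)`.

Choosing `Z` to maximize `#{i | Z ⊆ X i} * r ^ #Z` and passing to the sets `X i \ Z` reduces the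
problem to finding three disjoint sets in an `r`-spread family. Color the points uniformly at random
with six colors, two for each petal. If each pair of colors contains a member of the family with
probability more than `2 / 3`, some coloring works for all three pairs simultaneously. For a fixed
pair, the first color class covers all of a typical `X i` but a small fragment, by the encoding
argument of Alweiss, Lovett, Wu and Zhang, and the second color class contains one of these
fragments by the second moment method.
-/

open Finset Function Filter Asymptotics

lemma sum_powerset_pow_card {V : Type*} (q : ℝ) (S : Finset V) :
    ∑ Y ∈ S.powerset, q ^ #Y = (1 + q) ^ #S := by
  simpa [add_comm] using sum_pow_mul_eq_add_pow q 1 S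

section Spread

variable {ι V : Type*} [DecidableEq V] {r : ℝ} {s : Finset ι} {X : ι → Finset V}

/-- The indexed family `X i`, `i ∈ s`, of finite sets is `r`-spread: at most a proportion
`r ^ (-#Y)` of its members contain a given set `Y`. This is the pseudorandomness that produces
disjoint members. Indices are counted with multiplicity, so `X` need not be injective. -/
def IsSpread (r : ℝ) (s : Finset ι) (X : ι → Finset V) : Prop :=
  ∀ Y : Finset V, #{i ∈ s | Y ⊆ X i} * r ^ #Y ≤ #s

lemma IsSpread.pow_mul_card_le (h : IsSpread r s X) (hr : 0 < r) {q : ℝ} (hq : 0 ≤ q)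
    (Y : Finset V) : q ^ #Y * #{i ∈ s | Y ⊆ X i} ≤ #s * (q / r) ^ #Y := by
  rw [div_pow, mul_div_assoc', le_div_iff₀ (by positivity), mul_assoc, mul_comm]
  gcongr
  exact h Y

lemma IsSpread.sum_pow_card_inter_le (h : IsSpread r s X) (hr : 0 < r) {q : ℝ} (hq : 1 ≤ q)
    (S : Finset V) : ∑ j ∈ s, q ^ #(S ∩ X j) ≤ #s * (1 + (q - 1) / r) ^ #S := by
  calc ∑ j ∈ s, q ^ #(S ∩ X j)
      = ∑ j ∈ s, ∑ Y ∈ S.powerset with Y ⊆ X j, (q - 1) ^ #Y := by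
        refine sum_congr rfl fun j _ => ?_
        have : {Y ∈ S.powerset | Y ⊆ X j} = (S ∩ X j).powerset := by
          ext Y
          simp only [mem_filter, mem_powerset, subset_inter_iff]
        rw [this, sum_powerset_pow_card, add_sub_cancel]
    _ = ∑ Y ∈ S.powerset, (q - 1) ^ #Y * #{j ∈ s | Y ⊆ X j} := by
        simp only [sum_filter]
        rw [sum_comm]
        simp only [← sum_filter, sum_const, nsmul_eq_mul, mul_comm]
    _ ≤ ∑ Y ∈ S.powerset, #s * ((q - 1) / r) ^ #Y := by
        refine sum_le_sum fun Y _ => ?_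
        exact h.pow_mul_card_le hr (sub_nonneg.2 hq) Y
    _ = #s * (1 + (q - 1) / r) ^ #S := by rw [← mul_sum, sum_powerset_pow_card]

lemma exists_isSpread_link (s : Finset ι) (X : ι → Finset V) (hr : 0 < r) :
    ∃ Z, (#s : ℝ) ≤ #{i ∈ s | Z ⊆ X i} * r ^ #Z ∧
      IsSpread r {i ∈ s | Z ⊆ X i} fun i => X i \ Z := by
  obtain ⟨Z, -, hZ⟩ := exists_max_image (s.biUnion X).powerset
    (fun Z => #{i ∈ s | Z ⊆ X i} * r ^ #Z) ⟨∅, empty_mem_powerset _⟩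
  refine ⟨Z, by simpa using hZ ∅ (empty_mem_powerset _), fun Y => ?_⟩
  rcases eq_empty_or_nonempty {i ∈ s | Z ⊆ X i ∧ Y ⊆ X i \ Z} with h | ⟨i, hi⟩
  · simp [filter_filter, h]
  simp only [mem_filter] at hi
  obtain ⟨his, hZi, hYi⟩ := hi
  have hdisj : Disjoint Z Y := disjoint_of_subset_right hYi disjoint_sdiff
  have hlink : {i ∈ s | Z ⊆ X i ∧ Y ⊆ X i \ Z} = {i ∈ s | Z ∪ Y ⊆ X i} := by
    simp only [subset_sdiff, hdisj.symm, and_true, union_subset_iff]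
  have hmax := hZ (Z ∪ Y) <| mem_powerset.2 <|
    (union_subset hZi (hYi.trans sdiff_subset)).trans (subset_biUnion_of_mem X his)
  rw [card_union_of_disjoint hdisj, pow_add, mul_comm (r ^ #Z), ← mul_assoc] at hmax
  rw [filter_filter, hlink]
  exact le_of_mul_le_mul_right hmax (by positivity)

lemma IsSpread.sum_sum_pow_card_inter_le (h : IsSpread r s X) (hr : 0 < r) {q : ℝ} (hq : 1 ≤ q)
    {t : ℕ} {G : Finset ι} {T : ι → Finset V} (hG : G ⊆ s) (hTX : ∀ i ∈ G, T i ⊆ X i)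
    (hT : ∀ i ∈ G, #(T i) ≤ t) :
    ∑ i ∈ G, ∑ j ∈ G, q ^ #(T i ∩ T j) ≤ #G * (#s * (1 + (q - 1) / r) ^ t) := by
  rw [← nsmul_eq_mul]
  refine sum_le_card_nsmul _ _ _ fun i hi => ?_
  calc ∑ j ∈ G, q ^ #(T i ∩ T j)
      ≤ ∑ j ∈ G, q ^ #(T i ∩ X j) := by
        gcongr with j hj
        exact hTX j hj
    _ ≤ ∑ j ∈ s, q ^ #(T i ∩ X j) :=
        sum_le_sum_of_subset_of_nonneg hG fun _ _ _ => by positivity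
    _ ≤ #s * (1 + (q - 1) / r) ^ #(T i) := h.sum_pow_card_inter_le hr hq _
    _ ≤ #s * (1 + (q - 1) / r) ^ t := by
        have : 0 ≤ (q - 1) / r := div_nonneg (sub_nonneg.2 hq) hr.le
        gcongr
        exacts [by linarith, hT i hi]

lemma sq_sum_sum_le_card_filter_mul {Ω : Type*} (A : Finset Ω) (G : Finset ι) (w : ι → Ω → ℝ) :
    (∑ i ∈ G, ∑ ω ∈ A, w i ω) ^ 2 ≤
      #{ω ∈ A | ∃ i ∈ G, w i ω ≠ 0} * ∑ i ∈ G, ∑ j ∈ G, ∑ ω ∈ A, w i ω * w j ω := by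
  have hsupport : ∑ i ∈ G, ∑ ω ∈ A, w i ω = ∑ ω ∈ A with ∃ i ∈ G, w i ω ≠ 0, ∑ i ∈ G, w i ω := by
    rw [sum_filter_of_ne fun _ _ => exists_ne_zero_of_sum_ne_zero, sum_comm]
  have hmoment : ∑ ω ∈ A, (∑ i ∈ G, w i ω) ^ 2 = ∑ i ∈ G, ∑ j ∈ G, ∑ ω ∈ A, w i ω * w j ω := by
    simp only [sq, sum_mul_sum]
    rw [sum_comm]
    exact sum_congr rfl fun i _ => sum_comm
  rw [hsupport, ← hmoment]
  refine sq_sum_le_card_mul_sum_sq.trans ?_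
  gcongr
  exact filter_subset _ _

lemma IsSpread.card_mul_card_le_card_filter_exists_subset {Ω : Type*} (h : IsSpread r s X)
    (hr : 0 < r) {q : ℝ} (hq : 1 ≤ q) {t : ℕ} {G : Finset ι} {T : ι → Finset V} (hG : G ⊆ s)
    (hTX : ∀ i ∈ G, T i ⊆ X i) (hT : ∀ i ∈ G, #(T i) ≤ t) (A : Finset Ω) (B : Ω → Finset V)
    (hB : ∀ i ∈ G, ∀ j ∈ G, #{ω ∈ A | T i ∪ T j ⊆ B ω} * q ^ #(T i ∪ T j) = #A) :
    (#G * #A : ℝ) ≤ #{ω ∈ A | ∃ i ∈ G, T i ⊆ B ω} * (#s * (1 + (q - 1) / r) ^ t) := by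
  have hpos : 0 < 1 + (q - 1) / r := by
    have := div_nonneg (sub_nonneg.2 hq) hr.le
    linarith
  let w (i : ι) (ω : Ω) : ℝ := if T i ⊆ B ω then q ^ #(T i) else 0
  have hmean : ∀ i ∈ G, ∑ ω ∈ A, w i ω = #A := fun i hi => by
    simpa [w, ← sum_filter] using hB i hi i hi
  have hcorr : ∀ i ∈ G, ∀ j ∈ G, ∑ ω ∈ A, w i ω * w j ω = #A * q ^ #(T i ∩ T j) := by
    intro i hi j hj
    rw [← hB i hi j hj, mul_assoc, ← pow_add, card_union_add_card_inter, pow_add]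
    simp only [w, ite_zero_mul_ite_zero, ← union_subset_iff, ← sum_filter, sum_const, nsmul_eq_mul]
  have hw : ∀ i ω, w i ω ≠ 0 ↔ T i ⊆ B ω := fun i ω =>
    ite_ne_right_iff.trans (and_iff_left (by positivity))
  have hCS := sq_sum_sum_le_card_filter_mul A G w
  simp only [hw, sum_congr rfl hmean, sum_congr rfl fun i hi => sum_congr rfl (hcorr i hi),
    ← mul_sum, sum_const, nsmul_eq_mul] at hCS
  rcases (by positivity : (0 : ℝ) ≤ #G * #A).eq_or_lt with h0 | h0
  · rw [← h0]
    positivity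
  refine le_of_mul_le_mul_left ?_ h0
  calc (#G * #A : ℝ) * (#G * #A)
      = (#G * #A) ^ 2 := (sq _).symm
    _ ≤ #{ω ∈ A | ∃ i ∈ G, T i ⊆ B ω} * (#A * ∑ i ∈ G, ∑ j ∈ G, q ^ #(T i ∩ T j)) := hCS
    _ ≤ #{ω ∈ A | ∃ i ∈ G, T i ⊆ B ω} * (#A * (#G * (#s * (1 + (q - 1) / r) ^ t))) := by
        gcongr
        exact h.sum_sum_pow_card_inter_le hr hq hG hTX hT
    _ = #G * #A * (#{ω ∈ A | ∃ i ∈ G, T i ⊆ B ω} * (#s * (1 + (q - 1) / r) ^ t)) := by ring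

end Spread

section Coloring

variable {V κ : Type*} [Fintype V] [DecidableEq κ]

/-- The set of points to which the coloring `c` gives the color `a`. For a uniformly random coloring
it is a random set that contains each point independently with probability `1 / Fintype.card κ`. -/
def colorClass (c : V → κ) (a : κ) : Finset V := {v | c v = a}

lemma mem_colorClass {c : V → κ} {a : κ} {v : V} : v ∈ colorClass c a ↔ c v = a :=
  mem_filter_univ v

variable [DecidableEq V]

lemma colorClass_recolor (c : V → κ) (a : κ) (T : Finset V) :
    colorClass (fun v => if v ∈ T then a else c v) a = colorClass c a ∪ T := by
  ext v
  simp only [mem_colorClass, mem_union, ite_eq_left_iff]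
  tauto

variable [Fintype κ]

lemma card_filter_eqOn_compl (c : V → κ) (Y : Finset V) :
    #{d : V → κ | ∀ v ∉ Y, d v = c v} = Fintype.card κ ^ #Y := by
  have hpi : ({d : V → κ | ∀ v ∉ Y, d v = c v} : Finset _) =
      Fintype.piFinset fun v => if v ∈ Y then univ else {c v} := by
    ext d
    simp only [mem_filter_univ, Fintype.mem_piFinset]
    exact forall_congr' fun v => by by_cases hv : v ∈ Y <;> simp [hv]
  simp [hpi, apply_ite card]

lemma card_filter_colorClass_eq_and_subset {a b : κ} (hab : a ≠ b) {W Y : Finset V}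
    (hWY : Disjoint W Y) :
    #{c : V → κ | colorClass c a = W ∧ Y ⊆ colorClass c b} =
      (Fintype.card κ - 1) ^ #(W ∪ Y)ᶜ := by
  have hpi : ({c : V → κ | colorClass c a = W ∧ Y ⊆ colorClass c b} : Finset _) =
      Fintype.piFinset fun v => if v ∈ W ∪ Y then if v ∈ W then {a} else {b} else {a}ᶜ := by
    ext c
    simp only [mem_filter_univ, Fintype.mem_piFinset, Finset.ext_iff, subset_iff, mem_colorClass,
      ← forall_and]
    refine forall_congr' fun v => ?_
    by_cases hW : v ∈ W
    · simp [hW, disjoint_left.1 hWY hW]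
    · by_cases hY : v ∈ Y <;> simp +contextual [hW, hY, hab.symm]
  have hfilter : ({v | v ∉ W ∪ Y} : Finset V) = (W ∪ Y)ᶜ := by ext v; simp
  simp only [hpi, Fintype.card_piFinset, apply_ite card, card_singleton, ite_self, card_compl {a},
    prod_ite, prod_const, one_pow, one_mul, hfilter]

lemma card_filter_subset_colorClass_mul_pow {a b : κ} (hab : a ≠ b) {W Y : Finset V}
    (hWY : Disjoint W Y) :
    #{c : V → κ | colorClass c a = W ∧ Y ⊆ colorClass c b} * (Fintype.card κ - 1) ^ #Y =
      #{c : V → κ | colorClass c a = W} := by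
  have hW := card_filter_colorClass_eq_and_subset hab (disjoint_empty_right W)
  simp only [empty_subset, and_true, union_empty] at hW
  have hcard : #(W ∪ Y)ᶜ + #Y = #Wᶜ := by
    rw [compl_union, ← sdiff_eq_inter_compl, card_sdiff_add_card_eq_card]
    exact subset_compl_iff_disjoint_left.2 hWY
  rw [hW, card_filter_colorClass_eq_and_subset hab hWY, ← pow_add, hcard]

end Coloring

section Fragment

variable {ι V : Type*} [DecidableEq V]

/-- `T` is a fragment of `X i` relative to `W`: a part of `X i` disjoint from `W` that completes `W`
to a superset of some member of the family, and is contained in every member that is contained in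
`W ∪ T`. The last property makes the number of possible `T` small once `W ∪ T` is known. -/
structure IsFragment (s : Finset ι) (X : ι → Finset V) (W : Finset V) (i : ι) (T : Finset V) :
    Prop where
  subset : T ⊆ X i
  disjoint : Disjoint W T
  exists_subset : ∃ j ∈ s, X j ⊆ W ∪ T
  subset_of_subset : ∀ j ∈ s, X j ⊆ W ∪ T → T ⊆ X j

lemma exists_isFragment {s : Finset ι} (X : ι → Finset V) (W : Finset V) {i : ι} (hi : i ∈ s) :
    ∃ T, IsFragment s X W i T := by
  obtain ⟨j, hj, hmin⟩ := exists_min_image {j ∈ s | X j ⊆ W ∪ X i} (fun j => #(X j \ W))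
    ⟨i, mem_filter.2 ⟨hi, subset_union_right⟩⟩
  simp only [mem_filter, and_imp] at hj hmin
  have hji : X j \ W ⊆ X i := sdiff_le_iff.2 hj.2
  refine ⟨X j \ W, hji, disjoint_sdiff, ⟨j, hj.1, ?_⟩, fun k hk hkW => ?_⟩
  · rw [union_sdiff_self_eq_union]
    exact subset_union_right
  · have hkj : X k \ W ⊆ X j \ W := sdiff_le_iff.2 hkW
    rw [← eq_of_subset_of_card_le hkj (hmin k hk (hkW.trans (union_subset_union_right hji)))]
    exact sdiff_subset

variable [Fintype V]

/-- The sets that can be a fragment `T` with `W ∪ T = U`, as far as `U` alone can tell. Counting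
them bounds the number of ways to recover `T` from `W ∪ T`. -/
def candidateFragments (s : Finset ι) (X : ι → Finset V) (U : Finset V) : Finset (Finset V) :=
  {T | (∃ j ∈ s, X j ⊆ U) ∧ ∀ j ∈ s, X j ⊆ U → T ⊆ X j}

lemma card_candidateFragments_le {s : Finset ι} {X : ι → Finset V} {n : ℕ}
    (hX : ∀ i ∈ s, #(X i) ≤ n) (U : Finset V) : #(candidateFragments s X U) ≤ 2 ^ n := by
  by_cases h : ∃ j ∈ s, X j ⊆ U
  · obtain ⟨j, hj, hjU⟩ := h
    calc #(candidateFragments s X U) ≤ #(X j).powerset :=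
          card_le_card fun T hT => mem_powerset.2 ((mem_filter.1 hT).2.2 j hj hjU)
      _ = 2 ^ #(X j) := card_powerset _
      _ ≤ 2 ^ n := Nat.pow_le_pow_right two_pos (hX j hj)
  · simp [candidateFragments, h]

variable {κ : Type*} [Fintype κ] [DecidableEq κ]

lemma IsSpread.card_large_fragment_le {s : Finset ι} {X : ι → Finset V} {r : ℝ}
    (h : IsSpread r s X) {n : ℕ} (hX : ∀ i ∈ s, #(X i) ≤ n) (a : κ) (hr : Fintype.card κ ≤ r)
    {T : Finset V → ι → Finset V} (hT : ∀ W, ∀ i ∈ s, IsFragment s X W i (T W i)) (t : ℕ) :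
    (#{p ∈ (univ : Finset (V → κ)) ×ˢ s | t ≤ #(T (colorClass p.1 a) p.2)} : ℝ) ≤
      Fintype.card κ ^ Fintype.card V * (2 ^ n * (#s * (Fintype.card κ / r) ^ t)) := by
  classical
  set k := Fintype.card κ
  have hk : 0 < k := Fintype.card_pos_iff.2 ⟨a⟩
  have hr0 : 0 < r := (Nat.cast_pos.2 hk).trans_le hr
  let large (c : V → κ) := {Y ∈ candidateFragments s X (colorClass c a) | t ≤ #Y}
  let preimages (c : V → κ) (Y : Finset V) : Finset ((V → κ) × ι) :=
    ({d | ∀ v ∉ Y, d v = c v} : Finset (V → κ)) ×ˢ {i ∈ s | Y ⊆ X i}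
  -- Recoloring the fragment `Y` of `(c, i)` with `a` gives a coloring whose class of color `a` is
  -- `colorClass c a ∪ Y`, which leaves at most `2 ^ n` candidates for `Y`. Then `c` is known up to
  -- its colors on `Y`, and spreadness bounds the number of `i` with `Y ⊆ X i`.
  have hcover : {p ∈ (univ : Finset (V → κ)) ×ˢ s | t ≤ #(T (colorClass p.1 a) p.2)} ⊆
      univ.biUnion fun c => (large c).biUnion (preimages c) := by
    rintro ⟨c, i⟩ hp
    obtain ⟨hi, ht⟩ : i ∈ s ∧ t ≤ #(T (colorClass c a) i) := by simpa using hp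
    have hfrag := hT (colorClass c a) i hi
    set Y := T (colorClass c a) i
    simp only [mem_biUnion, mem_univ, true_and]
    refine ⟨fun v => if v ∈ Y then a else c v, Y, mem_filter.2 ⟨mem_filter_univ _ |>.2 ?_, ht⟩, ?_⟩
    · rw [colorClass_recolor]
      exact ⟨hfrag.exists_subset, hfrag.subset_of_subset⟩
    · simp +contextual [preimages, hi, hfrag.subset]
  have hpreimages : ∀ c, ∀ Y ∈ large c, (#(preimages c Y) : ℝ) ≤ #s * (k / r) ^ t := by
    intro c Y hY
    rw [card_product, card_filter_eqOn_compl, Nat.cast_mul, Nat.cast_pow]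
    refine (h.pow_mul_card_le hr0 k.cast_nonneg Y).trans ?_
    gcongr #s * ?_
    exact pow_le_pow_of_le_one (by positivity) ((div_le_one hr0).2 hr) (mem_filter.1 hY).2
  calc (#{p ∈ (univ : Finset (V → κ)) ×ˢ s | t ≤ #(T (colorClass p.1 a) p.2)} : ℝ)
      ≤ ∑ c : V → κ, ∑ Y ∈ large c, (#(preimages c Y) : ℝ) := by
        exact_mod_cast (card_le_card hcover).trans
          (card_biUnion_le.trans (sum_le_sum fun c _ => card_biUnion_le))
    _ ≤ ∑ c : V → κ, #(large c) * (#s * (k / r) ^ t) := by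
        gcongr with c
        rw [← nsmul_eq_mul]
        exact sum_le_card_nsmul _ _ _ (hpreimages c)
    _ ≤ ∑ _c : V → κ, 2 ^ n * (#s * (k / r) ^ t) := by
        gcongr with c
        exact_mod_cast (card_filter_le _ _).trans (card_candidateFragments_le hX _)
    _ = k ^ Fintype.card V * (2 ^ n * (#s * (k / r) ^ t)) := by simp [k]


lemma IsSpread.card_small_fragment_mul_card_le {s : Finset ι} {X : ι → Finset V} {r : ℝ}
    (h : IsSpread r s X) (hr : 0 < r) {a b : κ} (hab : a ≠ b) {W : Finset V}
    {T : ι → Finset V} (hT : ∀ i ∈ s, IsFragment s X W i (T i)) (t : ℕ) :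
    (#{i ∈ s | ¬ t ≤ #(T i)} * #{c : V → κ | colorClass c a = W} : ℝ) ≤
      #{c : V → κ | (∃ j ∈ s, X j ⊆ colorClass c a ∪ colorClass c b) ∧ colorClass c a = W} *
        (#s * (1 + (Fintype.card κ - 2) / r) ^ t) := by
  have hκ : (2 : ℝ) ≤ Fintype.card κ := by
    exact_mod_cast Fintype.one_lt_card_iff.2 ⟨a, b, hab⟩
  have hfrag : ∀ i ∈ ({i ∈ s | ¬ t ≤ #(T i)} : Finset ι), IsFragment s X W i (T i) :=
    fun i hi => hT i (mem_filter.1 hi).1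
  have hmoment := h.card_mul_card_le_card_filter_exists_subset hr (q := Fintype.card κ - 1)
    (by linarith) (filter_subset _ s) (fun i hi => (hfrag i hi).subset)
    (fun i hi => (not_le.1 (mem_filter.1 hi).2).le) {c : V → κ | colorClass c a = W}
    (colorClass · b) fun i hi j hj => by
      have hdisj : Disjoint W (T i ∪ T j) :=
        disjoint_union_right.2 ⟨(hfrag i hi).disjoint, (hfrag j hj).disjoint⟩
      rw [filter_filter, ← card_filter_subset_colorClass_mul_pow hab hdisj, Nat.cast_mul,
        Nat.cast_pow, Nat.cast_pred (Fintype.card_pos_iff.2 ⟨a⟩)]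
  rw [sub_sub, one_add_one_eq_two, filter_filter] at hmoment
  refine hmoment.trans ?_
  have : 0 ≤ 1 + (Fintype.card κ - 2) / r := by
    have := div_nonneg (sub_nonneg.2 hκ) hr.le
    linarith
  refine mul_le_mul_of_nonneg_right (Nat.cast_le.2 (card_le_card fun c hc => ?_)) (by positivity)
  obtain ⟨hcW, i, hi, hic⟩ := (mem_filter_univ _).1 hc
  obtain ⟨j, hj, hjW⟩ := (hfrag i hi).exists_subset
  rw [← hcW] at hjW
  exact (mem_filter_univ _).2 ⟨⟨j, hj, hjW.trans (union_subset_union_right hic)⟩, hcW⟩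

lemma IsSpread.card_small_fragment_le {s : Finset ι} {X : ι → Finset V} {r : ℝ}
    (h : IsSpread r s X) (hr : 0 < r) {a b : κ} (hab : a ≠ b)
    {T : Finset V → ι → Finset V} (hT : ∀ W, ∀ i ∈ s, IsFragment s X W i (T W i)) (t : ℕ) :
    (#{p ∈ (univ : Finset (V → κ)) ×ˢ s | ¬ t ≤ #(T (colorClass p.1 a) p.2)} : ℝ) ≤
      #{c : V → κ | ∃ j ∈ s, X j ⊆ colorClass c a ∪ colorClass c b} *
        (#s * (1 + (Fintype.card κ - 2) / r) ^ t) := by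
  have hfiber : ∀ W, {p ∈ (univ : Finset (V → κ)) ×ˢ s |
      ¬ t ≤ #(T (colorClass p.1 a) p.2) ∧ colorClass p.1 a = W} =
        ({c | colorClass c a = W} : Finset (V → κ)) ×ˢ {i ∈ s | ¬ t ≤ #(T W i)} := by
    intro W
    ext ⟨c, i⟩
    simp only [mem_filter, mem_product, mem_univ, true_and]
    constructor
    · rintro ⟨hi, ht, rfl⟩
      exact ⟨rfl, hi, ht⟩
    · rintro ⟨rfl, hi, ht⟩
      exact ⟨hi, ht, rfl⟩
  rw [card_eq_sum_card_fiberwise (f := fun p => colorClass p.1 a) (t := univ) (by simp),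
    card_eq_sum_card_fiberwise (s := {c : V → κ | _}) (f := (colorClass · a)) (t := univ)
      (by simp), Nat.cast_sum, Nat.cast_sum, sum_mul]
  refine sum_le_sum fun W _ => ?_
  rw [filter_filter, filter_filter, hfiber, card_product, Nat.cast_mul, mul_comm]
  exact h.card_small_fragment_mul_card_le hr hab (hT W) t

theorem IsSpread.le_card_exists_subset_colorClass_union {s : Finset ι} {X : ι → Finset V} {r : ℝ}
    (h : IsSpread r s X) (hs : s.Nonempty) {n : ℕ} (hX : ∀ i ∈ s, #(X i) ≤ n) {a b : κ}
    (hab : a ≠ b) (hr : Fintype.card κ ≤ r) (t : ℕ) :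
    (1 - 2 ^ n * (Fintype.card κ / r) ^ t) * Fintype.card κ ^ Fintype.card V ≤
      #{c : V → κ | ∃ j ∈ s, X j ⊆ colorClass c a ∪ colorClass c b} *
        (1 + (Fintype.card κ - 2) / r) ^ t := by
  have hr0 : 0 < r := (Nat.cast_pos.2 (Fintype.card_pos_iff.2 ⟨a⟩)).trans_le hr
  have hs0 : (0 : ℝ) < #s := Nat.cast_pos.2 hs.card_pos
  choose! T hT using fun W i (hi : i ∈ s) => exists_isFragment X W hi
  have hlarge := h.card_large_fragment_le hX a hr hT t
  have hsmall := h.card_small_fragment_le hr0 hab hT t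
  have htotal : (#{p ∈ (univ : Finset (V → κ)) ×ˢ s | t ≤ #(T (colorClass p.1 a) p.2)} +
      #{p ∈ (univ : Finset (V → κ)) ×ˢ s | ¬ t ≤ #(T (colorClass p.1 a) p.2)} : ℝ) =
      Fintype.card κ ^ Fintype.card V * #s := by
    rw [← Nat.cast_add, card_filter_add_card_filter_not]
    simp
  refine le_of_mul_le_mul_right ?_ hs0
  linarith

end Fragment

section Sunflower

variable {ι V P : Type*} [DecidableEq V]

/-- The sets `X p` form a sunflower: any two with distinct indices meet in the same
set, the kernel. The family is indexed, so a constant family also counts as a sunflower. -/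
def IsSunflower (X : P → Finset V) : Prop :=
  ∃ Z, Pairwise fun p q => X p ∩ X q = Z

variable [Fintype P]

lemma exists_forall_mem_of_lt_card {Ω : Type*} [Fintype Ω] [Nonempty P] {E : P → Finset Ω}
    (h : ∀ p, (1 - 1 / Fintype.card P : ℝ) * Fintype.card Ω < #(E p)) : ∃ ω, ∀ p, ω ∈ E p := by
  classical
  by_contra! hcon
  have hcover : univ ⊆ univ.biUnion fun p => (E p)ᶜ := fun ω _ => by simpa using hcon ω
  have hP : (0 : ℝ) < Fintype.card P := Nat.cast_pos.2 Fintype.card_pos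
  refine lt_irrefl (Fintype.card Ω : ℝ) ?_
  calc (Fintype.card Ω : ℝ)
      ≤ ∑ p, (#(E p)ᶜ : ℝ) := by exact_mod_cast (card_le_card hcover).trans card_biUnion_le
    _ < ∑ _p : P, (Fintype.card Ω / Fintype.card P : ℝ) := by
        refine sum_lt_sum_of_nonempty univ_nonempty fun p _ => ?_
        rw [card_compl, Nat.cast_sub (card_le_univ _)]
        linear_combination h p
    _ = Fintype.card Ω := by simp [mul_div_cancel₀, hP.ne']

theorem IsSpread.exists_pairwise_disjoint_of_finite [Finite V] [Nonempty P] {s : Finset ι}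
    {X : ι → Finset V} {r : ℝ} (h : IsSpread r s X) (hs : s.Nonempty) {n t : ℕ}
    (hX : ∀ i ∈ s, #(X i) ≤ n) (hr : 2 * Fintype.card P ≤ r)
    (ht : (1 - 1 / Fintype.card P) * (1 + (2 * Fintype.card P - 2) / r) ^ t <
      1 - 2 ^ n * (2 * Fintype.card P / r) ^ t) :
    ∃ j : P → ι, (∀ p, j p ∈ s) ∧ Pairwise fun p q => Disjoint (X (j p)) (X (j q)) := by
  classical
  have := Fintype.ofFinite V
  have hκ : (Fintype.card (P × Bool) : ℝ) = 2 * Fintype.card P := by simp [mul_comm]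
  have hP : (1 : ℝ) ≤ Fintype.card P := Nat.one_le_cast.2 Fintype.card_pos
  have hq : 0 < 1 + (2 * Fintype.card P - 2) / r := by
    have : 0 ≤ (2 * Fintype.card P - 2) / r := div_nonneg (by linarith) (by linarith)
    linarith
  obtain ⟨c, hc⟩ := exists_forall_mem_of_lt_card (E := fun p : P =>
      {c : V → P × Bool | ∃ j ∈ s, X j ⊆ colorClass c (p, false) ∪ colorClass c (p, true)}) <| by
    intro p
    have hp := h.le_card_exists_subset_colorClass_union hs hX (a := (p, false)) (b := (p, true))
      (by simp) (hκ.trans_le hr) t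
    rw [hκ] at hp
    refine lt_of_mul_lt_mul_right (lt_of_lt_of_le ?_ hp) (pow_nonneg hq.le t)
    rw [Fintype.card_fun, Nat.cast_pow, hκ, mul_right_comm]
    gcongr
  simp only [mem_filter_univ] at hc
  choose j hjs hj using hc
  refine ⟨j, hjs, fun p q hpq => disjoint_left.2 fun v hvp hvq => hpq ?_⟩
  have hcolor : ∀ p, v ∈ X (j p) → (c v).1 = p := fun p hv => by
    rcases mem_union.1 (hj p hv) with hv | hv <;> rw [mem_colorClass.1 hv]
  rw [← hcolor p hvp, hcolor q hvq]

lemma IsSpread.subtype {s : Finset ι} {X : ι → Finset V} {r : ℝ} (h : IsSpread r s X)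
    (p : V → Prop) [DecidablePred p] : IsSpread r s fun i => (X i).subtype p := by
  intro Y
  have hY : ∀ i, Y ⊆ (X i).subtype p ↔ Y.map (Embedding.subtype p) ⊆ X i := fun i => by
    simp [subset_iff]
  simpa only [hY, card_map] using h (Y.map (Embedding.subtype p))

theorem IsSpread.exists_pairwise_disjoint [Nonempty P] {s : Finset ι}
    {X : ι → Finset V} {r : ℝ} (h : IsSpread r s X) (hs : s.Nonempty) {n t : ℕ}
    (hX : ∀ i ∈ s, #(X i) ≤ n) (hr : 2 * Fintype.card P ≤ r)
    (ht : (1 - 1 / Fintype.card P) * (1 + (2 * Fintype.card P - 2) / r) ^ t <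
      1 - 2 ^ n * (2 * Fintype.card P / r) ^ t) :
    ∃ j : P → ι, (∀ p, j p ∈ s) ∧ Pairwise fun p q => Disjoint (X (j p)) (X (j q)) := by
  obtain ⟨j, hjs, hj⟩ := (h.subtype (· ∈ s.biUnion X)).exists_pairwise_disjoint_of_finite hs
    (fun i hi => ((card_subtype _ _).trans_le (card_filter_le _ _)).trans (hX i hi)) hr ht
  refine ⟨j, hjs, fun p q hpq => disjoint_left.2 fun v hvp hvq => ?_⟩
  have hv : v ∈ s.biUnion X := mem_biUnion.2 ⟨j p, hjs p, hvp⟩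
  have hdisj : Disjoint ((X (j p)).subtype (· ∈ s.biUnion X)) ((X (j q)).subtype _) := hj hpq
  exact disjoint_left.1 hdisj (mem_subtype (a := ⟨v, hv⟩) |>.2 hvp) (mem_subtype.2 hvq)

theorem exists_isSunflower_of_pow_lt_card [Nonempty P] {s : Finset ι} {X : ι → Finset V}
    (hXinj : Set.InjOn X s) {n t : ℕ} (hX : ∀ i ∈ s, #(X i) = n) {r : ℝ}
    (hr : 2 * Fintype.card P ≤ r)
    (ht : (1 - 1 / Fintype.card P) * (1 + (2 * Fintype.card P - 2) / r) ^ t <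
      1 - 2 ^ n * (2 * Fintype.card P / r) ^ t)
    (hs : r ^ n < #s) :
    ∃ j : P → ι, Injective j ∧ (∀ p, j p ∈ s) ∧ IsSunflower (X ∘ j) := by
  have hr0 : 0 < r := lt_of_lt_of_le (by simp [Fintype.card_pos]) hr
  obtain ⟨Z, hsZ, hlink⟩ := exists_isSpread_link s X hr0
  have hZ : ({i ∈ s | Z ⊆ X i} : Finset ι).Nonempty := by
    by_contra! hempty
    rw [hempty, card_empty, Nat.cast_zero, zero_mul] at hsZ
    exact (pow_pos hr0 n).not_ge (hs.le.trans hsZ)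
  have hZX : ∀ i ∈ s, Z ⊆ X i → Z ≠ X i := by
    rintro i hi - rfl
    have hone : #{k ∈ s | X i ⊆ X k} ≤ 1 := by
      have heq : ∀ k ∈ ({k ∈ s | X i ⊆ X k} : Finset ι), k = i := by
        intro k hk
        obtain ⟨hk, hik⟩ := mem_filter.1 hk
        exact hXinj hk hi (eq_of_subset_of_card_le hik ((hX k hk).trans (hX i hi).symm).le).symm
      exact card_le_one.2 fun k hk l hl => (heq k hk).trans (heq l hl).symm
    refine (hs.trans_le hsZ).not_ge ?_
    rw [hX i hi]
    exact mul_le_of_le_one_left (by positivity) (by exact_mod_cast hone)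
  obtain ⟨j, hj, hdisj⟩ := hlink.exists_pairwise_disjoint hZ (P := P)
    (fun i hi => (card_le_card sdiff_subset).trans (hX i (mem_filter.1 hi).1).le) hr ht
  simp only [mem_filter] at hj
  refine ⟨j, fun p q hpq => ?_, fun p => (hj p).1, Z, fun p q hpq => ?_⟩
  · by_contra hne
    have hempty : Disjoint (X (j p) \ Z) (X (j q) \ Z) := hdisj hne
    rw [hpq, disjoint_self_iff_empty, sdiff_eq_empty_iff_subset] at hempty
    exact hZX _ (hj q).1 (hj q).2 ((hj q).2.antisymm hempty)
  · refine subset_antisymm (fun v hv => ?_) (subset_inter (hj p).2 (hj q).2)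
    obtain ⟨hvp, hvq⟩ := mem_inter.1 hv
    by_contra hvZ
    exact Finset.disjoint_left.1 (hdisj hpq) (mem_sdiff.2 ⟨hvp, hvZ⟩) (mem_sdiff.2 ⟨hvq, hvZ⟩)

end Sunflower

section SunflowerFree

variable {ι β : Type*}

/-- The notion of `SunflowerFreeZMod` for words over an arbitrary alphabet `β`, with an arbitrary
set `ι` of coordinates. -/
def SunflowerFree (F : Finset (ι → β)) : Prop :=
  ∀ x ∈ F, ∀ y ∈ F, ∀ z ∈ F, x ≠ y → y ≠ z → x ≠ z → ∃ i, ExactlyTwoEq (x i) (y i) (z i)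

variable [Fintype ι]

/-- The graph of a word, as a finite set. It turns a family of words into a family of sets of
common size `Fintype.card ι`, to which results on set families apply. -/
def wordGraph (x : ι → β) : Finset (ι × β) :=
  univ.map ⟨fun i => (i, x i), fun _ _ h => congrArg Prod.fst h⟩

lemma mem_wordGraph {x : ι → β} {p : ι × β} : p ∈ wordGraph x ↔ x p.1 = p.2 := by
  refine mem_map.trans ⟨?_, fun h => ⟨p.1, mem_univ _, Prod.ext rfl h⟩⟩
  rintro ⟨i, -, rfl⟩
  rfl

lemma card_wordGraph (x : ι → β) : #(wordGraph x) = Fintype.card ι := card_map _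

lemma wordGraph_injective : Injective (wordGraph : (ι → β) → Finset (ι × β)) := fun x _ h =>
  funext fun i => (mem_wordGraph (p := (i, x i)).1 (h ▸ mem_wordGraph.2 rfl)).symm

lemma IsSunflower.apply_eq_of_apply_eq [DecidableEq ι] [DecidableEq β] {P : Type*} {x : P → ι → β}
    (hx : IsSunflower fun p => wordGraph (x p)) {p q : P} (hpq : p ≠ q) {i : ι}
    (hi : x p i = x q i) (m : P) : x p i = x m i := by
  obtain ⟨Z, hZ⟩ := hx
  rcases eq_or_ne p m with rfl | hpm
  · rfl
  have hiZ : (i, x p i) ∈ Z := hZ hpq ▸ mem_inter.2 ⟨mem_wordGraph.2 rfl, mem_wordGraph.2 hi.symm⟩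
  rw [← hZ hpm, mem_inter] at hiZ
  exact (mem_wordGraph.1 hiZ.2).symm

lemma SunflowerFree.not_isSunflower_wordGraph [DecidableEq ι] [DecidableEq β]
    {F : Finset (ι → β)} (hF : SunflowerFree F) {x : Fin 3 → ι → β} (hxF : ∀ p, x p ∈ F)
    (hx : Injective x) :
    ¬ IsSunflower fun p => wordGraph (x p) := by
  intro hsun
  obtain ⟨i, ⟨h, h'⟩ | ⟨h, h'⟩ | ⟨h, h'⟩⟩ := hF _ (hxF 0) _ (hxF 1) _ (hxF 2)
    (hx.ne (by decide)) (hx.ne (by decide)) (hx.ne (by decide))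
  · exact h' (hsun.apply_eq_of_apply_eq (by decide) h 2)
  · exact h' (hsun.apply_eq_of_apply_eq (by decide) h 1)
  · exact h' (hsun.apply_eq_of_apply_eq (by decide) h 0).symm

theorem SunflowerFree.card_le_pow {F : Finset (ι → β)} (hF : SunflowerFree F) {r : ℝ} {t : ℕ}
    (hr : 6 ≤ r)
    (ht : 2 / 3 * (1 + 4 / r) ^ t < 1 - 2 ^ Fintype.card ι * (6 / r) ^ t) :
    (#F : ℝ) ≤ r ^ Fintype.card ι := by
  classical
  by_contra! hlt
  obtain ⟨x, hx, hxF, hsun⟩ := exists_isSunflower_of_pow_lt_card (P := Fin 3)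
    wordGraph_injective.injOn (fun x _ => card_wordGraph x) (t := t) (by norm_num; exact hr)
    (by norm_num; exact ht) hlt
  exact hF.not_isSunflower_wordGraph hxF hx hsun

end SunflowerFree

section Estimates

lemma log_le_two_mul_sqrt {x : ℝ} (hx : 0 < x) : Real.log x ≤ 2 * √x := by
  have h := Real.log_le_sub_one_of_pos (Real.sqrt_pos.2 hx)
  rw [Real.log_sqrt hx.le] at h
  linarith

lemma one_add_pow_le_one_div_one_sub {x : ℝ} {t : ℕ} (hx : 0 ≤ x) (htx : t * x < 1) :
    (1 + x) ^ t ≤ 1 / (1 - t * x) := by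
  calc (1 + x) ^ t ≤ Real.exp x ^ t := by
        gcongr
        rw [add_comm]
        exact Real.add_one_le_exp x
    _ = Real.exp (t * x) := (Real.exp_nat_mul x t).symm
    _ ≤ 1 / (1 - t * x) := Real.exp_bound_div_one_sub_of_interval (by positivity) htx

lemma two_pow_mul_one_div_pow_le {n t : ℕ} (hn : 1 ≤ n) {x : ℝ} (hx : 0 < x)
    (h : 4 * n ≤ t * Real.log x) : 2 ^ n * (1 / x) ^ t ≤ (1 / 8 : ℝ) := by
  have h2 : (2 : ℝ) ≤ Real.exp 1 := by linarith [Real.add_one_le_exp (1 : ℝ)]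
  have hxt : x ^ t = Real.exp (t * Real.log x) := by rw [Real.exp_nat_mul, Real.exp_log hx]
  rw [one_div_pow, mul_one_div, div_le_div_iff₀ (by positivity) (by norm_num), one_mul, hxt]
  calc (2 : ℝ) ^ n * 8 = 2 ^ (n + 3) := by ring
    _ ≤ 2 ^ (4 * n) := pow_le_pow_right₀ one_le_two (by lia)
    _ ≤ Real.exp 1 ^ (4 * n) := by gcongr
    _ = Real.exp (4 * n) := by simp [← Real.exp_nat_mul]
    _ ≤ Real.exp (t * Real.log x) := Real.exp_le_exp.2 h

lemma two_thirds_mul_pow_lt {n t : ℕ} (hn : 1 ≤ n) {r : ℝ} (hr : 0 < r) (htr : 24 * t ≤ r)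
    (hnt : 4 * n ≤ t * Real.log (r / 6)) :
    2 / 3 * (1 + 4 / r) ^ t < 1 - 2 ^ n * (6 / r) ^ t := by
  have hsmall : t * (4 / r) ≤ 1 / 6 := by
    rw [mul_div_assoc', div_le_div_iff₀ hr (by norm_num)]
    linarith
  have hpow : (1 + 4 / r) ^ t ≤ 6 / 5 :=
    calc (1 + 4 / r) ^ t ≤ 1 / (1 - t * (4 / r)) :=
          one_add_pow_le_one_div_one_sub (by positivity) (by linarith)
      _ ≤ 1 / (1 - 1 / 6) := by gcongr
      _ = 6 / 5 := by norm_num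
  have htail := two_pow_mul_one_div_pow_le hn (div_pos hr (by norm_num)) hnt
  rw [one_div_div] at htail
  linarith

lemma four_mul_le_floor_mul_log {x : ℝ} (hx : 1 < x) :
    4 * x ≤ ⌊16 * x / Real.log x⌋₊ * Real.log (64 * x / Real.log x) := by
  have hx0 : 0 < x := one_pos.trans hx
  have hlog : 0 < Real.log x := Real.log_pos hx
  have hsqrt : √x * Real.log x ≤ 2 * x := by
    nlinarith [log_le_two_mul_sqrt hx0, Real.mul_self_sqrt hx0.le, Real.sqrt_nonneg x]
  have hbase : √x ≤ 64 * x / Real.log x := by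
    rw [le_div_iff₀ hlog]
    linarith
  have hhalf : Real.log x / 2 ≤ Real.log (64 * x / Real.log x) := by
    rw [← Real.log_sqrt hx0.le]
    exact Real.log_le_log (Real.sqrt_pos.2 hx0) hbase
  have hfloor : 8 * x / Real.log x ≤ ⌊16 * x / Real.log x⌋₊ := by
    have h1 : 1 ≤ 8 * x / Real.log x := by
      rw [le_div_iff₀ hlog]
      linarith [Real.log_le_sub_one_of_pos hx0]
    have := Nat.sub_one_lt_floor (16 * x / Real.log x)
    linarith [show 16 * x / Real.log x = 8 * x / Real.log x + 8 * x / Real.log x by ring]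
  calc 4 * x = 8 * x / Real.log x * (Real.log x / 2) := by field_simp; norm_num
    _ ≤ ⌊16 * x / Real.log x⌋₊ * Real.log (64 * x / Real.log x) := by gcongr

lemma loglog_pos {n : ℕ} (hn : 16 ≤ n) :
    0 < Real.log (Real.log n) ∧ 0 < Real.log (Real.log (Real.log n)) := by
  have hlog : Real.exp 1 < Real.log n := by
    calc Real.exp 1 < 4 * Real.log 2 := by
          linarith [Real.log_two_gt_d9, Real.exp_one_lt_d9]
      _ = Real.log 16 := by
          rw [show (16 : ℝ) = 2 ^ 4 by norm_num, Real.log_pow]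
          norm_num
      _ ≤ Real.log n := Real.log_le_log (by norm_num) (by exact_mod_cast hn)
  have hloglog : 1 < Real.log (Real.log n) :=
    (Real.lt_log_iff_exp_lt ((Real.exp_pos 1).trans hlog)).2 hlog
  exact ⟨one_pos.trans hloglog, Real.log_pos hloglog⟩

lemma pow_div_exp_one_le_factorial (n : ℕ) : (n / Real.exp 1 : ℝ) ^ n ≤ n.factorial := by
  have h := Real.pow_div_factorial_le_exp n n.cast_nonneg n
  rw [div_pow, ← Real.exp_nat_mul, mul_one]
  rwa [div_le_iff₀ (by positivity), mul_comm, ← div_le_iff₀ (by positivity)] at h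
lemma isBigO_pow_div_log {C α : ℝ} (hC : 0 < C) (hα : 0 < α) :
    (fun n : ℕ => (C * n / Real.log n) ^ n) =O[atTop] fun n : ℕ => (n.factorial : ℝ) *
      ((Real.log (Real.log (Real.log n))) ^ 2 / (α * Real.log (Real.log n))) ^ n := by
  have hlog : Tendsto (fun n : ℕ => Real.log n) atTop atTop :=
    Real.tendsto_log_atTop.comp tendsto_natCast_atTop_atTop
  have hloglog := Real.tendsto_log_atTop.comp hlog
  have hlll := (Real.tendsto_log_atTop.comp hloglog).eventually_ge_atTop 1
  have hll := (Real.isLittleO_log_id_atTop.comp_tendsto hlog).def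
    (show 0 < 1 / (Real.exp 1 * C * α) by positivity)
  refine IsBigO.of_bound' ?_
  filter_upwards [eventually_ge_atTop 16, hlll, hll] with n hn hlll hll
  simp only [comp_apply] at hlll hll
  obtain ⟨hll0, -⟩ := loglog_pos hn
  have hlog0 : 0 < Real.log n := Real.log_pos (by exact_mod_cast (by lia : 1 < n))
  rw [id, Real.norm_of_nonneg hll0.le, Real.norm_of_nonneg hlog0.le] at hll
  rw [Real.norm_of_nonneg (by positivity), Real.norm_of_nonneg (by positivity)]
  have hbase : Real.exp 1 * C / Real.log n ≤
      (Real.log (Real.log (Real.log n))) ^ 2 / (α * Real.log (Real.log n)) := by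
    rw [one_div_mul_eq_div, le_div_iff₀ (by positivity)] at hll
    calc Real.exp 1 * C / Real.log n ≤ 1 / (α * Real.log (Real.log n)) := by
          rw [div_le_div_iff₀ hlog0 (by positivity)]
          linarith
      _ ≤ (Real.log (Real.log (Real.log n))) ^ 2 / (α * Real.log (Real.log n)) := by
          gcongr
          exact one_le_pow₀ hlll
  calc (C * n / Real.log n) ^ n
      = (n / Real.exp 1) ^ n * (Real.exp 1 * C / Real.log n) ^ n := by
        rw [← mul_pow]
        field_simp
    _ ≤ n.factorial *
          ((Real.log (Real.log (Real.log n))) ^ 2 / (α * Real.log (Real.log n))) ^ n := by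
        gcongr ?_ * ?_ ^ n
        exact pow_div_exp_one_le_factorial n

end Estimates

theorem SunflowerFree.card_le_pow_div_log {ι β : Type*} [Fintype ι] {F : Finset (ι → β)}
    (hF : SunflowerFree F) (hι : 1 < Fintype.card ι) :
    (#F : ℝ) ≤ (384 * Fintype.card ι / Real.log (Fintype.card ι)) ^ Fintype.card ι := by
  set n := Fintype.card ι
  have hn : (1 : ℝ) < n := Nat.one_lt_cast.2 hι
  have hlog : 0 < Real.log n := Real.log_pos hn
  have hr : 384 ≤ 384 * n / Real.log n := by
    rw [le_div_iff₀ hlog]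
    linarith [Real.log_le_sub_one_of_pos (one_pos.trans hn)]
  have hfloor : (⌊16 * n / Real.log n⌋₊ : ℝ) ≤ 16 * n / Real.log n := Nat.floor_le (by positivity)
  refine hF.card_le_pow (t := ⌊16 * n / Real.log n⌋₊) (by linarith) ?_
  refine two_thirds_mul_pow_lt hι.le (by linarith) ?_ ?_
  · linarith [show 384 * n / Real.log n = 24 * (16 * n / Real.log n) by ring]
  · rw [show 384 * n / Real.log n / 6 = 64 * n / Real.log n by ring]
    exact four_mul_le_floor_mul_log hn

universe u

theorem sunflowerFree_zmod_bound_indep_of_D_general {α : ℝ} (hα : 0 < α) :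
    ∃ K : ℝ, 0 < K ∧ ∀ {β : Type u} {n : ℕ}, 16 ≤ n →
      ∀ F : Finset (Fin n → β), SunflowerFree F →
        (#F : ℝ) ≤ K * n.factorial *
          ((Real.log (Real.log (Real.log n))) ^ 2 / (α * Real.log (Real.log n))) ^ n := by
  obtain ⟨K, hK, hbound⟩ := bound_of_isBigO_nat_atTop
    (isBigO_pow_div_log (C := 384) (by norm_num) hα)
  refine ⟨K, hK, fun {β n} hn F hF => ?_⟩
  obtain ⟨hll, hlll⟩ := loglog_pos hn
  have hcard := hF.card_le_pow_div_log (by rw [Fintype.card_fin]; lia)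
  rw [Fintype.card_fin] at hcard
  calc (#F : ℝ) ≤ (384 * n / Real.log n) ^ n := hcard
    _ ≤ ‖(384 * n / Real.log n) ^ n‖ := Real.le_norm_self _
    _ ≤ K * ‖_‖ := hbound (by positivity)
    _ = K * n.factorial *
          ((Real.log (Real.log (Real.log n))) ^ 2 / (α * Real.log (Real.log n))) ^ n := by
        rw [Real.norm_of_nonneg (by positivity), mul_assoc]

theorem sunflowerFree_zmod_bound_indep_of_D (α : ℝ) (hα : 1 < α) :
    ∃ K : ℝ, 0 < K ∧ ∀ D n : ℕ, 2 < D → 16 ≤ n →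
      ∀ F : Finset (Fin n → ZMod D), SunflowerFreeZMod D n F →
        (F.card : ℝ) ≤ K * (Nat.factorial n : ℝ) *
          ((Real.log (Real.log (Real.log n))) ^ 2 / (α * Real.log (Real.log n))) ^ n := by
  obtain ⟨K, hK, h⟩ := sunflowerFree_zmod_bound_indep_of_D_general (one_pos.trans hα)
  exact ⟨K, hK, fun _ _ _ hn F hF => h hn F hF⟩
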